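/- Let s, y ∈ ℝⁿ, let H be a symmetric positive definite n×n real matrix, and let β > 0 satisfy sᵀy > −1/β. Set γ = 1/(sᵀy + 1/β), ω = 1/(sᵀy + 2/β), and let H₊ be the SP-BFGS update of H with data (s, y, β). Then every eigenvalue of H₊, and in particular its largest eigenvalue, is bounded above: λ_max(H₊) ≤ Tr(H₊) ≤ (1 + γ ‖y‖₂ ‖s‖₂)² Tr(H) + γ ‖s‖₂², where ‖·‖₂ denotes the Euclidean norm. -/

import Mathlib

open Matrix

/-!
The update is a congruence of `H` plus a nonnegative multiple of `s sᵀ`, so it is positive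
semidefinite and its eigenvalues are at most its trace. Expanding,
`Tr H₊ = Tr H - 2ω yᵀHs + ωγ (yᵀHy)(sᵀs) + γ sᵀs`; the operator norm of `H` is an eigenvalue,
hence at most `Tr H`, which controls both bilinear terms. Since `0 < ω ≤ γ`, replacing `ω` by `γ`
completes the square.
-/

section TraceBounds

variable {m n 𝕜 : Type*} [Fintype n] [RCLike 𝕜]

theorem norm_toLp_eq_sqrt_dotProduct (x : n → ℝ) : ‖WithLp.toLp 2 x‖ = √(x ⬝ᵥ x) := by
  simp [EuclideanSpace.norm_eq, dotProduct, sq]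

open scoped ComplexOrder in
theorem le_trace_of_mem_spectrum_of_posSemidef [DecidableEq n] {A : Matrix n n 𝕜}
    (hA : A.PosSemidef) {μ : ℝ} (hμ : μ ∈ spectrum ℝ A) : μ ≤ RCLike.re A.trace := by
  rw [hA.isHermitian.spectrum_real_eq_range_eigenvalues] at hμ
  obtain ⟨i, rfl⟩ := hμ
  rw [hA.isHermitian.trace_eq_sum_eigenvalues, ← RCLike.ofReal_sum, RCLike.ofReal_re]
  exact Finset.single_le_sum (fun j _ => hA.eigenvalues_nonneg j) (Finset.mem_univ i)

open scoped Matrix.Norms.L2Operator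

open scoped ComplexOrder in
theorem l2_opNorm_le_trace_of_posSemidef [DecidableEq n] {A : Matrix n n 𝕜}
    (hA : A.PosSemidef) : ‖A‖ ≤ RCLike.re A.trace := by
  have hnorm : ‖A‖ = ‖(RCLike.ofReal ∘ hA.isHermitian.eigenvalues : n → 𝕜)‖ := by
    conv_lhs => rw [hA.isHermitian.spectral_theorem, Unitary.conjStarAlgAut_apply,
      ← Unitary.coe_star, CStarRing.norm_mul_coe_unitary, CStarRing.norm_coe_unitary_mul,
      l2_opNorm_diagonal]
  have htrace : 0 ≤ RCLike.re A.trace := (RCLike.nonneg_iff.mp hA.trace_nonneg).1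
  rw [hnorm, pi_norm_le_iff_of_nonneg htrace]
  intro i
  rw [Function.comp_apply, RCLike.norm_of_nonneg (hA.eigenvalues_nonneg i)]
  exact le_trace_of_mem_spectrum_of_posSemidef hA
    (hA.isHermitian.eigenvalues_mem_spectrum_real i)

theorem norm_star_dotProduct_mulVec_le [Fintype m] [DecidableEq n] (A : Matrix m n 𝕜)
    (x : m → 𝕜) (z : n → 𝕜) :
    ‖star x ⬝ᵥ A *ᵥ z‖ ≤ ‖A‖ * (‖WithLp.toLp 2 x‖ * ‖WithLp.toLp 2 z‖) :=
  calc ‖star x ⬝ᵥ A *ᵥ z‖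
      = ‖inner 𝕜 (WithLp.toLp 2 x) (WithLp.toLp 2 (A *ᵥ z))‖ := by
        rw [EuclideanSpace.inner_toLp_toLp, dotProduct_comm]
    _ ≤ ‖WithLp.toLp 2 x‖ * ‖WithLp.toLp 2 (A *ᵥ z)‖ := norm_inner_le_norm _ _
    _ ≤ ‖WithLp.toLp 2 x‖ * (‖A‖ * ‖WithLp.toLp 2 z‖) := by
        gcongr
        exact l2_opNorm_mulVec A (WithLp.toLp 2 z)
    _ = ‖A‖ * (‖WithLp.toLp 2 x‖ * ‖WithLp.toLp 2 z‖) := mul_left_comm _ _ _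

theorem abs_dotProduct_mulVec_le_trace_of_posSemidef {A : Matrix n n ℝ} (hA : A.PosSemidef)
    (x z : n → ℝ) : |x ⬝ᵥ A *ᵥ z| ≤ A.trace * (√(x ⬝ᵥ x) * √(z ⬝ᵥ z)) := by
  classical
  have hopNorm : ‖A‖ ≤ A.trace := l2_opNorm_le_trace_of_posSemidef hA
  calc |x ⬝ᵥ A *ᵥ z|
      ≤ ‖A‖ * (√(x ⬝ᵥ x) * √(z ⬝ᵥ z)) := by
        simpa only [star_trivial, Real.norm_eq_abs, norm_toLp_eq_sqrt_dotProduct]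
          using norm_star_dotProduct_mulVec_le A x z
    _ ≤ A.trace * (√(x ⬝ᵥ x) * √(z ⬝ᵥ z)) := by gcongr

end TraceBounds

section Update

variable {n : Type*} [Fintype n] [DecidableEq n]

theorem trace_one_sub_vecMulVec_mul_mul_one_sub_vecMulVec {R : Type*} [CommRing R]
    {H : Matrix n n R} (hH : H.IsSymm) (s y : n → R) (ω : R) :
    ((1 - ω • vecMulVec s y) * H * (1 - ω • vecMulVec y s)).trace =
      H.trace - 2 * ω * (y ⬝ᵥ H *ᵥ s) + ω ^ 2 * (y ⬝ᵥ H *ᵥ y) * (s ⬝ᵥ s) := by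
  have hleft : (vecMulVec s y * H).trace = y ⬝ᵥ H *ᵥ s := by
    rw [vecMulVec_mul, trace_vecMulVec, dotProduct_comm, dotProduct_mulVec]
  have hright : (H * vecMulVec y s).trace = y ⬝ᵥ H *ᵥ s := by
    rw [mul_vecMulVec, trace_vecMulVec, dotProduct_comm, dotProduct_mulVec, ← mulVec_transpose,
      hH.eq, dotProduct_comm]
  have hboth : (vecMulVec s y * H * vecMulVec y s).trace = (y ⬝ᵥ H *ᵥ y) * (s ⬝ᵥ s) := by
    rw [vecMulVec_mul, vecMulVec_mul_vecMulVec, trace_vecMulVec, dotProduct_smul, smul_eq_mul,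
      ← dotProduct_mulVec]
  simp only [sub_mul, mul_sub, one_mul, mul_one, smul_mul_assoc, mul_smul_comm, trace_sub,
    trace_smul, smul_eq_mul, hleft, hright, hboth]
  ring

/-- The SP-BFGS update `H₊` of the inverse Hessian approximation `H` along the step `s` with
gradient change `y`. The penalty `β` of the paper enters only through `γ` and `ω`, which are free
parameters here. At `ω = 0` the quotient `γ / ω` is the junk value `0`. -/
def spbfgsUpdate {K : Type*} [Field K] (H : Matrix n n K) (s y : n → K) (γ ω : K) :
    Matrix n n K :=
  (1 - ω • vecMulVec s y) * H * (1 - ω • vecMulVec y s) +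
    (ω * (γ / ω + (γ - ω) * (y ⬝ᵥ H *ᵥ y))) • vecMulVec s s

theorem trace_spbfgsUpdate {K : Type*} [Field K] {H : Matrix n n K} (hH : H.IsSymm)
    (s y : n → K) (γ : K) {ω : K} (hω : ω ≠ 0) :
    (spbfgsUpdate H s y γ ω).trace =
      H.trace - 2 * ω * (y ⬝ᵥ H *ᵥ s) + ω * γ * (y ⬝ᵥ H *ᵥ y) * (s ⬝ᵥ s) + γ * (s ⬝ᵥ s) := by
  rw [spbfgsUpdate, trace_add, trace_smul, trace_vecMulVec, smul_eq_mul,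
    trace_one_sub_vecMulVec_mul_mul_one_sub_vecMulVec hH]
  field_simp
  ring

variable {H : Matrix n n ℝ} {γ ω : ℝ}

theorem posSemidef_spbfgsUpdate (hH : H.PosSemidef) (s y : n → ℝ) (hω : 0 ≤ ω) (hωγ : ω ≤ γ) :
    (spbfgsUpdate H s y γ ω).PosSemidef := by
  have hadjoint : (1 - ω • vecMulVec s y)ᴴ = 1 - ω • vecMulVec y s := by
    simp only [conjTranspose_sub, conjTranspose_one, conjTranspose_smul, conjTranspose_vecMulVec,
      star_trivial]
  have hcongr := hadjoint ▸ hH.mul_mul_conjTranspose_same (1 - ω • vecMulVec s y)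
  have hrankOne : (vecMulVec s s).PosSemidef := by
    simpa only [star_trivial] using posSemidef_vecMulVec_self_star s
  have hyHy : 0 ≤ y ⬝ᵥ H *ᵥ y := by
    simpa only [star_trivial] using hH.dotProduct_mulVec_nonneg y
  have hcoeff : 0 ≤ ω * (γ / ω + (γ - ω) * (y ⬝ᵥ H *ᵥ y)) :=
    mul_nonneg hω (add_nonneg (div_nonneg (hω.trans hωγ) hω)
      (mul_nonneg (sub_nonneg.mpr hωγ) hyHy))
  exact hcongr.add (hrankOne.smul hcoeff)

theorem trace_spbfgsUpdate_le (hH : H.PosSemidef) (s y : n → ℝ) (hω : 0 < ω) (hωγ : ω ≤ γ) :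
    (spbfgsUpdate H s y γ ω).trace ≤
      (1 + γ * √(y ⬝ᵥ y) * √(s ⬝ᵥ s)) ^ 2 * H.trace + γ * √(s ⬝ᵥ s) ^ 2 := by
  have hγ : 0 ≤ γ := hω.le.trans hωγ
  have hs : s ⬝ᵥ s = √(s ⬝ᵥ s) ^ 2 :=
    (Real.sq_sqrt (by simpa only [star_trivial] using dotProduct_star_self_nonneg s)).symm
  calc (spbfgsUpdate H s y γ ω).trace
      = H.trace + 2 * ω * -(y ⬝ᵥ H *ᵥ s) + ω * γ * (y ⬝ᵥ H *ᵥ y) * √(s ⬝ᵥ s) ^ 2 +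
          γ * √(s ⬝ᵥ s) ^ 2 := by
        rw [← hs, trace_spbfgsUpdate (isHermitian_iff_isSymm.mp hH.isHermitian) s y γ hω.ne']
        ring
    _ ≤ H.trace + 2 * ω * |y ⬝ᵥ H *ᵥ s| + ω * γ * |y ⬝ᵥ H *ᵥ y| * √(s ⬝ᵥ s) ^ 2 +
          γ * √(s ⬝ᵥ s) ^ 2 := by
        gcongr
        · exact neg_le_abs _
        · exact le_abs_self _
    _ ≤ H.trace + 2 * γ * (H.trace * (√(y ⬝ᵥ y) * √(s ⬝ᵥ s))) +
          γ * γ * (H.trace * (√(y ⬝ᵥ y) * √(y ⬝ᵥ y))) * √(s ⬝ᵥ s) ^ 2 +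
          γ * √(s ⬝ᵥ s) ^ 2 := by
        gcongr <;> exact abs_dotProduct_mulVec_le_trace_of_posSemidef hH y _
    _ = (1 + γ * √(y ⬝ᵥ y) * √(s ⬝ᵥ s)) ^ 2 * H.trace + γ * √(s ⬝ᵥ s) ^ 2 := by ring

theorem spbfgs_eigenvalue_upper_bound_general (s y : n → ℝ) (hH : H.PosSemidef)
    {β : ℝ} (hβ : 0 < β) (hcurv : -(1 / β) < s ⬝ᵥ y)
    (hγ : γ = 1 / (s ⬝ᵥ y + 1 / β)) (hω : ω = 1 / (s ⬝ᵥ y + 2 / β)) :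
    (∀ μ ∈ spectrum ℝ (spbfgsUpdate H s y γ ω), μ ≤ (spbfgsUpdate H s y γ ω).trace) ∧
      (spbfgsUpdate H s y γ ω).trace ≤
        (1 + γ * √(y ⬝ᵥ y) * √(s ⬝ᵥ s)) ^ 2 * H.trace + γ * √(s ⬝ᵥ s) ^ 2 := by
  have hγ_denom : 0 < s ⬝ᵥ y + 1 / β := by linarith
  have hdenom : s ⬝ᵥ y + 1 / β ≤ s ⬝ᵥ y + 2 / β := by gcongr; norm_num
  have hω_pos : 0 < ω := hω ▸ one_div_pos.mpr (hγ_denom.trans_le hdenom)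
  have hωγ : ω ≤ γ := hω ▸ hγ ▸ one_div_le_one_div_of_le hγ_denom hdenom
  have hposSemidef := posSemidef_spbfgsUpdate hH s y hω_pos.le hωγ
  exact ⟨fun _ hμ => le_trace_of_mem_spectrum_of_posSemidef hposSemidef hμ,
    trace_spbfgsUpdate_le hH s y hω_pos hωγ⟩

end Update

/-- **Eigenvalue upper bound for the SP-BFGS update.**
Every eigenvalue of `H₊` (in particular the largest) is bounded above:
`λ_max(H₊) ≤ Tr(H₊) ≤ (1 + γ‖y‖₂‖s‖₂)² Tr(H) + γ‖s‖₂²`. -/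
theorem spbfgs_eigenvalue_upper_bound
    {n : ℕ} (s y : Fin n → ℝ)
    (H : Matrix (Fin n) (Fin n) ℝ) (hH : H.PosDef)
    (β : ℝ) (hβ : 0 < β) (hcurv : -(1 / β) < s ⬝ᵥ y)
    (γ ω : ℝ) (hγ : γ = 1 / (s ⬝ᵥ y + 1 / β)) (hω : ω = 1 / (s ⬝ᵥ y + 2 / β))
    (Hplus : Matrix (Fin n) (Fin n) ℝ)
    (hHplus : Hplus =
      (1 - ω • vecMulVec s y) * H * (1 - ω • vecMulVec y s) +
        (ω * (γ / ω + (γ - ω) * (y ⬝ᵥ H *ᵥ y))) • vecMulVec s s) :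
    (∀ μ ∈ spectrum ℝ Hplus, μ ≤ Matrix.trace Hplus) ∧
      Matrix.trace Hplus ≤
        (1 + γ * Real.sqrt (y ⬝ᵥ y) * Real.sqrt (s ⬝ᵥ s)) ^ 2 * Matrix.trace H +
          γ * Real.sqrt (s ⬝ᵥ s) ^ 2 := by
  subst hHplus
  exact spbfgs_eigenvalue_upper_bound_general s y hH.posSemidef hβ hcurv hγ hω
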